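/- arXiv:math/0511274 — 5 statements merged into one kernel-verified Lean document; each statement's English description precedes it below -/
import Mathlib

section
/- For all integers l, m ≥ 0, the Laguerre polynomials are orthonormal with respect to the weight e^{−t} on (0,∞): ∫_0^∞ p_l(t) · p_m(t) · e^{−t} dt = 1 if l = m, and = 0 if l ≠ m. -/
/-!
Expanding `p_l` and using `∫₀^∞ t ^ n e^{-t} dt = n!`, the `k`-th moment of `p_l` against `e^{-t}` is
`k! ∑ⱼ (-1)^j C(l,j) C(k+j,k)`. Up to the sign `(-1)^l`, this sum is the `l`-th forward difference
of the degree-`k` polynomial `x ↦ C(x,k)` at `x = k`, so it vanishes for `k < l` and has absolute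
value `1` for `k = l` (`sum_choose_mul_choose`, `integral_pow_mul_laguerre`).
Hence `p_l` is orthogonal to all polynomials of degree less than `l`, and
when `m ≤ l` only the leading coefficient `(-1)^m / m!` of `p_m` can contribute to `⟨p_l, p_m⟩`.
-/

/-- The Laguerre polynomial p_l(t) = ∑_{j=0}^{l} C(l,j) · (−t)^j / j!. -/
noncomputable def laguerre (l : ℕ) (t : ℝ) : ℝ :=
  ∑ j ∈ Finset.range (l + 1), (l.choose j : ℝ) * (-t) ^ j / (j.factorial : ℝ)

open MeasureTheory in
lemma integrableOn_pow_mul_exp_neg (n : ℕ) :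
    IntegrableOn (fun t : ℝ ↦ t ^ n * Real.exp (-t)) (Set.Ioi 0) := by
  have h := Real.GammaIntegral_convergent (s := n + 1) (by positivity)
  simpa [mul_comm] using h

lemma integral_pow_mul_exp_neg (n : ℕ) :
    ∫ t in Set.Ioi (0 : ℝ), t ^ n * Real.exp (-t) = n.factorial := by
  rw [← Real.Gamma_nat_eq_factorial, Real.Gamma_eq_integral (by positivity)]
  simp [mul_comm]

/-- For `k ≤ l`, the sum is `(-1) ^ l` times the `l`-th forward difference of `x ↦ x.choose k`
at `x = k`. -/
lemma sum_choose_mul_choose {k l : ℕ} (hkl : k ≤ l) :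
    ∑ j ∈ Finset.range (l + 1), (-1 : ℤ) ^ j * l.choose j * (k + j).choose k
      = if k = l then (-1) ^ l else 0 := by
  have key : (fwdDiff 1)^[l] (fun x ↦ x.choose k : ℕ → ℤ) k = if k = l then 1 else 0 := by
    rcases hkl.eq_or_lt with rfl | h
    · have := fwdDiff_iter_choose 0 k
      simp only [add_zero] at this
      simp [this]
    · obtain ⟨d, rfl⟩ := Nat.exists_eq_add_of_lt h
      have := fwdDiff_iter_choose 0 k
      simp only [add_zero] at this
      rw [show k + d + 1 = d + 1 + k by ring, Function.iterate_add_apply, this]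
      simp only [Nat.choose_zero_right, Function.iterate_succ_apply, Nat.cast_one, fwdDiff_const]
      simp [fwdDiff_iter_eq_sum_shift]
  rw [fwdDiff_iter_eq_sum_shift] at key
  calc _ = (-1 : ℤ) ^ l * (if k = l then 1 else 0) := by
        rw [← key, Finset.mul_sum]
        refine Finset.sum_congr rfl fun j hj ↦ ?_
        have hj : j ≤ l := by simpa [Nat.lt_succ_iff] using hj
        obtain ⟨d, rfl⟩ := Nat.exists_eq_add_of_le hj
        have hd : (-1 : ℤ) ^ d * (-1) ^ d = 1 := by rw [← mul_pow]; simp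
        simp only [add_tsub_cancel_left, smul_eq_mul, mul_one, pow_add]
        linear_combination (-(-1 : ℤ) ^ j * (j + d).choose j * (k + j).choose k) * hd
    _ = _ := by simp

lemma pow_mul_laguerre_mul_exp (k l : ℕ) (t : ℝ) :
    t ^ k * laguerre l t * Real.exp (-t) =
      ∑ j ∈ Finset.range (l + 1),
        ((-1) ^ j * l.choose j / j.factorial) * (t ^ (k + j) * Real.exp (-t)) := by
  rw [laguerre, Finset.mul_sum, Finset.sum_mul]
  refine Finset.sum_congr rfl fun j _ ↦ ?_
  rw [neg_pow, pow_add]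
  ring

open MeasureTheory in
lemma integrableOn_pow_mul_laguerre (k l : ℕ) :
    IntegrableOn (fun t : ℝ ↦ t ^ k * laguerre l t * Real.exp (-t)) (Set.Ioi 0) := by
  simp only [pow_mul_laguerre_mul_exp]
  exact integrable_finsetSum _ fun j _ ↦ (integrableOn_pow_mul_exp_neg (k + j)).const_mul _

lemma integral_pow_mul_laguerre {k l : ℕ} (hkl : k ≤ l) :
    ∫ t in Set.Ioi (0 : ℝ), t ^ k * laguerre l t * Real.exp (-t)
      = if k = l then (-1) ^ l * (l.factorial : ℝ) else 0 := by
  simp only [pow_mul_laguerre_mul_exp]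
  rw [MeasureTheory.integral_finsetSum _
    fun j _ ↦ (integrableOn_pow_mul_exp_neg (k + j)).const_mul _]
  simp only [MeasureTheory.integral_const_mul, integral_pow_mul_exp_neg]
  have key := congrArg (fun z : ℤ ↦ (k.factorial : ℝ) * z) (sum_choose_mul_choose hkl)
  push_cast at key
  rw [Finset.mul_sum] at key
  convert key using 1
  · refine Finset.sum_congr rfl fun j _ ↦ ?_
    have h : ((k + j).choose k : ℝ) * k.factorial * j.factorial = (k + j).factorial := by
      have := Nat.choose_mul_factorial_mul_factorial (Nat.le_add_right k j)
      rw [Nat.add_sub_cancel_left] at this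
      exact_mod_cast this
    rw [← h]
    have : (j.factorial : ℝ) ≠ 0 := by positivity
    field_simp
  · split_ifs with h
    · rw [h]; ring
    · simp

lemma integral_laguerre_mul_laguerre_of_le {l m : ℕ} (hml : m ≤ l) :
    ∫ t in Set.Ioi (0 : ℝ), laguerre l t * laguerre m t * Real.exp (-t)
      = if l = m then 1 else 0 := by
  have expand (t : ℝ) : laguerre l t * laguerre m t * Real.exp (-t) =
      ∑ k ∈ Finset.range (m + 1),
        ((-1) ^ k * m.choose k / k.factorial) * (t ^ k * laguerre l t * Real.exp (-t)) := by
    rw [laguerre.eq_def m, Finset.mul_sum, Finset.sum_mul]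
    refine Finset.sum_congr rfl fun k _ ↦ ?_
    rw [neg_pow]
    ring
  simp only [expand]
  rw [MeasureTheory.integral_finsetSum _
    fun k _ ↦ (integrableOn_pow_mul_laguerre k l).const_mul _]
  simp only [MeasureTheory.integral_const_mul]
  -- Terms with `k < m` have `k < l` and vanish.
  rw [Finset.sum_range_succ, Finset.sum_eq_zero, integral_pow_mul_laguerre hml]
  · split_ifs with h h' h'
    · subst h
      have : (m.factorial : ℝ) ≠ 0 := by positivity
      have hs : (-1 : ℝ) ^ m * (-1) ^ m = 1 := by rw [← mul_pow]; simp
      rw [Nat.choose_self]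
      field_simp
      simpa [sq] using hs
    · exact absurd h.symm h'
    · exact absurd h'.symm h
    · simp
  · intro k hk
    have hk : k < l := (Finset.mem_range.1 hk).trans_le hml
    rw [integral_pow_mul_laguerre hk.le, if_neg hk.ne, mul_zero]

/-- Orthonormality of the Laguerre polynomials for the weight e^{−t} on (0,∞). -/
theorem statement3 (l m : ℕ) :
    ∫ t in Set.Ioi (0 : ℝ), laguerre l t * laguerre m t * Real.exp (-t)
      = if l = m then 1 else 0 := by
  rcases le_total m l with h | h
  · exact integral_laguerre_mul_laguerre_of_le h
  · simpa only [mul_comm (laguerre m _), eq_comm] using integral_laguerre_mul_laguerre_of_le h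
end

section
/- (Barnes' Lemma, Mellin form.) Let r₁, r₂, t₁, t₂ ∈ ℂ and let f₁, f₂ : (0,∞) → ℂ be continuous functions. Suppose there is σ ∈ ℝ such that for every s ∈ ℂ with Re(s) > σ the integrals ∫_0^∞ |f_i(a)| a^{Re(s)−1/2} da/a (i = 1, 2) and ∫_0^∞ |f₁(a) f₂(a)| a^{Re(s)−1} da/a are finite, and moreover ∫_0^∞ f₁(a) a^{s−1/2} da/a = G₁(s+r₁)·G₁(s+r₂) and ∫_0^∞ f₂(a) a^{s−1/2} da/a = G₁(s+t₁)·G₁(s+t₂). Then for all s with Re(s) sufficiently large, ∫_0^∞ f₁(a) f₂(a) a^{s−1} da/a = 2 · [∏_{i=1}^{2} ∏_{j=1}^{2} G₁(s + r_i + t_j)] / G₁(2s + r₁ + r₂ + t₁ + t₂). -/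
/-!
In the logarithmic coordinate `a = e^u` the Mellin transform becomes a two-sided Laplace transform,
and `G₁(p) = ∫ 2 exp(-π e^{2x}) e^{px} dx` (`integral_kern`). Hence `G₁(s + r) G₁(s + t)` is the
transform of an explicit additive convolution, `bessel r t`, and injectivity of the Fourier
transform on `L¹(ℝ)` on a vertical line far to the right identifies `a^{-1/2} f₁(a)` and
`a^{-1/2} f₂(a)` almost everywhere with `bessel r₁ r₂` and `bessel t₁ t₂` (`eq_bessel`). No decay
estimate for `Γ` on vertical lines is needed.

The integral of the product of the two convolutions is a triple integral of
`exp(-π (e^{2x} + e^{2(u-x)} + e^{2y} + e^{2(u-y)}))` times the exponential of a linear form. The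
measure-preserving change of variables `polar₃` (logarithmic polar coordinates in `(x, y)` and a
translation in `u`) turns the exponent into `-π (e^{2z} + e^{2b})`, so the integral splits as
`G₁(s + r₁ + t₁) G₁(s + r₂ + t₂)` times a one-dimensional angular integral (`integral_triple`). The
same polar coordinates applied to `G₁(p) G₁(q)` evaluate the angular integral as
`G₁(p) G₁(q) / G₁(p + q)` (`integral_ang`), with `p = s + r₁ + t₂` and `q = s + r₂ + t₁`.
-/


open MeasureTheory

/-- G₁(s) = π^{−s/2} · Γ(s/2). -/
noncomputable def G1 (s : ℂ) : ℂ := (Real.pi : ℂ) ^ (-s / 2) * Complex.Gamma (s / 2)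

/-! ### The Gaussian kernel representing `G₁` -/

/-- `2 exp(-π e^{2x}) e^{px}`, the kernel whose total integral is `G₁(p)`: the logarithmic form of
the Gaussian integral representation of `G₁`. -/
noncomputable def kern (p : ℂ) (x : ℝ) : ℂ :=
  2 * Complex.exp (-(Real.pi * Real.exp (2 * x) : ℝ) + p * x)

lemma continuous_kern (p : ℂ) : Continuous (kern p) := by
  unfold kern; fun_prop

lemma kern_add (s p : ℂ) (x : ℝ) : kern (s + p) x = kern p x * Complex.exp (s * x) := by
  rw [kern, kern, mul_assoc, ← Complex.exp_add]; congr 2; ring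

lemma integral_Ioi_eq_integral_exp (φ : ℝ → ℂ) :
    ∫ a in Set.Ioi (0 : ℝ), φ a = ∫ u : ℝ, Real.exp u • φ (Real.exp u) := by
  have h := integral_image_eq_integral_abs_deriv_smul (s := Set.univ) MeasurableSet.univ
    (fun x _ => (Real.hasDerivAt_exp x).hasDerivWithinAt) Real.exp_injective.injOn φ
  simpa [Set.image_univ, Real.range_exp] using h

lemma integrableOn_Ioi_iff_exp (φ : ℝ → ℂ) :
    IntegrableOn φ (Set.Ioi (0 : ℝ)) ↔ Integrable (fun u : ℝ => Real.exp u • φ (Real.exp u)) := by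
  have h := integrableOn_image_iff_integrableOn_abs_deriv_smul (s := Set.univ) MeasurableSet.univ
    (fun x _ => (Real.hasDerivAt_exp x).hasDerivWithinAt) Real.exp_injective.injOn φ
  simpa [Set.image_univ, Real.range_exp] using h

lemma exp_cpow (u : ℝ) (s : ℂ) : ((Real.exp u : ℝ) : ℂ) ^ s = Complex.exp (s * u) := by
  rw [Complex.cpow_def_of_ne_zero (by exact_mod_cast (Real.exp_pos u).ne'),
    ← Complex.ofReal_log (Real.exp_pos u).le, Real.log_exp, mul_comm]

lemma gamma_exp (p : ℂ) (u : ℝ) :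
    Real.exp u • ((Real.exp (-Real.exp u) : ℂ) * (Real.exp u : ℂ) ^ (p - 1))
      = Complex.exp (-(Real.exp u : ℝ) + p * u) := by
  rw [exp_cpow, Complex.real_smul]
  push_cast
  rw [← Complex.exp_add, ← Complex.exp_add]
  congr 1; ring

/-- The substitution `u = 2x + log π` turns Euler's integral into the integral of `kern`. -/
lemma kern_eq (p : ℂ) (x : ℝ) :
    kern p x = 2 * (Real.pi : ℂ) ^ (-p / 2) *
      Complex.exp (-(Real.exp (2 * x + Real.log Real.pi) : ℝ)
        + p / 2 * ((2 * x + Real.log Real.pi : ℝ) : ℂ)) := by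
  have hpi := Real.pi_pos
  rw [kern, Complex.cpow_def_of_ne_zero (by exact_mod_cast hpi.ne'),
    ← Complex.ofReal_log hpi.le, mul_assoc, ← Complex.exp_add, Real.exp_add, Real.exp_log hpi]
  congr 2; push_cast; ring

lemma integrable_kern {p : ℂ} (hp : 0 < p.re) : Integrable (kern p) := by
  have h := (integrableOn_Ioi_iff_exp _).1 (Complex.GammaIntegral_convergent
    (s := p / 2) (by simpa using hp))
  simp_rw [gamma_exp] at h
  have h2 := ((h.comp_add_right (Real.log Real.pi)).comp_mul_left' (two_ne_zero)).const_mul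
    (2 * (Real.pi : ℂ) ^ (-p / 2))
  exact h2.congr (Filter.Eventually.of_forall fun x => (kern_eq p x).symm)

lemma integral_kern {p : ℂ} (hp : 0 < p.re) : ∫ x, kern p x = G1 p := by
  have h := Complex.Gamma_eq_integral (s := p / 2) (by simpa using hp)
  rw [Complex.GammaIntegral, integral_Ioi_eq_integral_exp] at h
  simp_rw [gamma_exp] at h
  simp_rw [kern_eq]
  rw [integral_const_mul, Measure.integral_comp_mul_left (fun y : ℝ =>
    Complex.exp (-(Real.exp (y + Real.log Real.pi) : ℝ)
        + p / 2 * ((y + Real.log Real.pi : ℝ) : ℂ))) 2,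
    integral_add_right_eq_self (fun y : ℝ => Complex.exp (-(Real.exp y : ℝ) + p / 2 * (y : ℂ))),
    ← h, G1, Complex.real_smul, abs_of_pos (by norm_num)]
  push_cast; ring

/-! ### Convolutions with transform `G₁(s + r) G₁(s + t)` -/

/-- The multiplicative convolution (in logarithmic coordinates) whose Mellin transform is
`G₁(s + r) G₁(s + t)`: essentially a `K`-Bessel function. -/
noncomputable def bessel (r t : ℂ) (u : ℝ) : ℂ := ∫ x, kern r x * kern t (u - x)

lemma bessel_mul_exp (r t s : ℂ) : (fun u : ℝ => bessel r t u * Complex.exp (s * u)) =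
    convolution (kern (s + r)) (kern (s + t)) (ContinuousLinearMap.mul ℂ ℂ) volume := by
  ext u
  rw [convolution, bessel, ← integral_mul_const]
  congr 1; ext x
  rw [ContinuousLinearMap.mul_apply', kern_add, kern_add,
    show s * (u : ℂ) = s * x + s * ((u - x : ℝ) : ℂ) by push_cast; ring, Complex.exp_add]
  ring

lemma integrable_bessel {r t s : ℂ} (hr : 0 < (s + r).re) (ht : 0 < (s + t).re) :
    Integrable (fun u : ℝ => bessel r t u * Complex.exp (s * u)) := by
  rw [bessel_mul_exp]
  exact (integrable_kern hr).integrable_convolution _ (integrable_kern ht)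

lemma integral_bessel {r t s : ℂ} (hr : 0 < (s + r).re) (ht : 0 < (s + t).re) :
    ∫ u : ℝ, bessel r t u * Complex.exp (s * u) = G1 (s + r) * G1 (s + t) := by
  rw [bessel_mul_exp, integral_convolution _ (integrable_kern hr) (integrable_kern ht),
    integral_kern hr, integral_kern ht, ContinuousLinearMap.mul_apply']

/-! ### Injectivity of the Fourier transform -/

/-- Injectivity of the Fourier transform on `L¹(ℝ)`: by self-adjointness and Fourier inversion for
Schwartz functions, an integrable `f` with zero Fourier transform is orthogonal to every test function. -/
lemma ae_zero_of_fourier {f : ℝ → ℂ} (hf : Integrable f)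
    (h : ∀ τ : ℝ, ∫ u : ℝ, Complex.exp (τ * u * Complex.I) * f u = 0) : ∀ᵐ u, f u = 0 := by
  have hF : FourierTransform.fourier f = 0 := by
    ext w
    rw [Real.fourier_eq']
    have := h (-2 * Real.pi * w)
    simp only [smul_eq_mul, Pi.zero_apply]
    rw [← this]
    congr 1; ext u; congr 2
    simp; ring
  apply ae_eq_zero_of_integral_contDiff_smul_eq_zero hf.locallyIntegrable
  intro g hg hgc
  let g' : ℝ → ℂ := fun x => g x
  have hg'c : HasCompactSupport g' := hgc.comp_left (g := fun x : ℝ => (x : ℂ)) (by simp)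
  have hg' : ContDiff ℝ ((⊤ : ℕ∞) : WithTop ℕ∞) g' := Complex.ofRealCLM.contDiff.comp hg
  let G : SchwartzMap ℝ ℂ := hg'c.toSchwartzMap hg'
  let ψ : SchwartzMap ℝ ℂ := FourierTransformInv.fourierInv G
  have hψ : FourierTransform.fourier (ψ : ℝ → ℂ) = g' := by
    rw [← SchwartzMap.fourier_coe, FourierTransform.fourier_fourierInv_eq]
    rfl
  have key := VectorFourier.integral_fourierIntegral_smul_eq_flip (L := innerₗ ℝ)
    (μ := volume) (ν := volume) Real.continuous_fourierChar (by fun_prop) (ψ.integrable) hf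
  have hF' : VectorFourier.fourierIntegral Real.fourierChar volume (innerₗ ℝ).flip f = 0 := by
    rw [flip_innerₗ]; exact hF
  have hψ' : VectorFourier.fourierIntegral Real.fourierChar volume (innerₗ ℝ) ψ = g' := hψ
  rw [hF', hψ'] at key
  simpa [g'] using key

/-! ### Logarithmic polar coordinates and the angular integral -/

/-- Half the logarithm of `1 + e^{2v}`. -/
noncomputable def lg (v : ℝ) : ℝ := Real.log (1 + Real.exp (2 * v)) / 2

lemma continuous_lg : Continuous lg := by
  unfold lg
  refine Continuous.div_const (Continuous.log (by fun_prop) fun x => ?_) _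
  positivity

lemma exp_two_lg (v : ℝ) : Real.exp (2 * lg v) = 1 + Real.exp (2 * v) := by
  rw [lg, mul_div_cancel₀ _ two_ne_zero, Real.exp_log (by positivity)]

lemma exp_sub_lg (z v : ℝ) :
    Real.exp (2 * (z - lg v)) + Real.exp (2 * (z - lg v + v)) = Real.exp (2 * z) := by
  have h : Real.exp (2 * z) = Real.exp (2 * (z - lg v)) * Real.exp (2 * lg v) := by
    rw [← Real.exp_add]; congr 1; ring
  rw [h, exp_two_lg, mul_add (2 : ℝ) _ v, Real.exp_add]; ring

/-- Logarithmic polar coordinates on the open quadrant: for `(x, y) = polar (v, z)` one has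
`e^{2x} + e^{2y} = e^{2z}` and `y - x = v`. -/
noncomputable def polar (q : ℝ × ℝ) : ℝ × ℝ := (q.2 - lg q.1, q.2 - lg q.1 + q.1)

lemma map_add_const_volume (c : ℝ) : Measure.map (fun z : ℝ => z + c) volume = volume :=
  map_add_right_eq_self volume c

lemma measurePreserving_polar :
    MeasurePreserving polar (volume.prod volume) (volume.prod volume) := by
  have h1 : MeasurePreserving (fun q : ℝ × ℝ => (q.1, q.2 + -lg q.1))
      (volume.prod volume) (volume.prod volume) :=
    (MeasurePreserving.id volume).skew_product (g := fun v z => z + -lg v)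
      (by have := continuous_lg; exact Continuous.measurable (by fun_prop))
      (Filter.Eventually.of_forall fun v => map_add_const_volume _)
  have h2 := (measurePreserving_prod_add (volume : Measure ℝ) (volume : Measure ℝ)).comp
    (Measure.measurePreserving_swap.comp h1)
  exact h2

/-- Logarithmic polar coordinates for `(x, y)` together with a fibrewise translation of the third
variable. -/
noncomputable def polar₃ (q : (ℝ × ℝ) × ℝ) : (ℝ × ℝ) × ℝ :=
  (polar q.1, q.2 + (q.1.2 - 2 * lg q.1.1 + q.1.1))

lemma measurePreserving_polar₃ :
    MeasurePreserving polar₃ ((volume.prod volume).prod volume)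
      ((volume.prod volume).prod volume) :=
  measurePreserving_polar.skew_product (g := fun q b => b + (q.2 - 2 * lg q.1 + q.1))
    (by have := continuous_lg; exact Continuous.measurable (by fun_prop))
    (Filter.Eventually.of_forall fun v => map_add_const_volume _)

/-- The angular part common to the two integrals below; its integral is the Beta integral
`∫ (1 + e^{2v})^{-(p+q)/2} e^{qv} dv`, up to the factor `2`. -/
noncomputable def ang (p q : ℂ) (v : ℝ) : ℂ := 2 * Complex.exp (q * v - (p + q) * lg v)

lemma kern_polar (p q : ℂ) (v z : ℝ) :
    kern p (z - lg v) * kern q (z - lg v + v) = ang p q v * kern (p + q) z := by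
  rw [kern, kern, ang, kern, mul_mul_mul_comm, mul_mul_mul_comm (2 : ℂ) (Complex.exp (q * v - _)),
    ← Complex.exp_add, ← Complex.exp_add, ← exp_sub_lg z v]
  congr 2; push_cast; ring

lemma integrable_kern_polar {p q : ℂ} (hp : 0 < p.re) (hq : 0 < q.re) :
    Integrable (fun a : ℝ × ℝ => ang p q a.1 * kern (p + q) a.2) (volume.prod volume) := by
  have h := measurePreserving_polar.integrable_comp_of_integrable
    ((integrable_kern hp).mul_prod (integrable_kern hq))
  exact h.congr (Filter.Eventually.of_forall fun a => kern_polar p q a.1 a.2)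

lemma kern_ne_zero (p : ℂ) (x : ℝ) : kern p x ≠ 0 :=
  mul_ne_zero two_ne_zero (Complex.exp_ne_zero _)

lemma integrable_ang {p q : ℂ} (hp : 0 < p.re) (hq : 0 < q.re) : Integrable (ang p q) := by
  obtain ⟨z, hz⟩ := (integrable_kern_polar hp hq).prod_left_ae.exists
  exact (integrable_mul_const_iff (kern_ne_zero (p + q) z).isUnit _).1 hz

lemma integral_ang {p q : ℂ} (hp : 0 < p.re) (hq : 0 < q.re) :
    (∫ v, ang p q v) * G1 (p + q) = G1 p * G1 q := by
  have hpq : 0 < (p + q).re := by rw [Complex.add_re]; positivity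
  have hint := (integrable_kern hp).mul_prod (integrable_kern hq)
  rw [← integral_kern hp, ← integral_kern hq, ← integral_kern hpq, ← integral_prod_mul,
    ← integral_prod_mul]
  conv_rhs => rw [← measurePreserving_polar.map_eq]
  rw [integral_map measurePreserving_polar.aemeasurable
    (by rw [measurePreserving_polar.map_eq]; exact hint.aestronglyMeasurable)]
  exact integral_congr_ae (Filter.Eventually.of_forall fun a => (kern_polar p q a.1 a.2).symm)

/-! ### The triple integral -/

/-- The integrand of `∫ bessel r₁ r₂ u * bessel t₁ t₂ u * e^{su} du` once both factors are written
as integrals. -/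
noncomputable def triple (r₁ r₂ t₁ t₂ s : ℂ) (a : (ℝ × ℝ) × ℝ) : ℂ :=
  kern r₁ a.1.1 * kern r₂ (a.2 - a.1.1) * (kern t₁ a.1.2 * kern t₂ (a.2 - a.1.2))
    * Complex.exp (s * a.2)

lemma continuous_triple (r₁ r₂ t₁ t₂ s : ℂ) : Continuous (triple r₁ r₂ t₁ t₂ s) := by
  have := continuous_kern
  unfold triple; fun_prop

/-- The exponents at `(x, y, u) = polar₃ ((v, z), b)` decouple because
`e^{2x} + e^{2y} = e^{2z}` and `e^{2(u-x)} + e^{2(u-y)} = e^{2b}`. -/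
lemma triple_polar₃ (r₁ r₂ t₁ t₂ s : ℂ) (a : (ℝ × ℝ) × ℝ) :
    triple r₁ r₂ t₁ t₂ s (polar₃ a) =
      2 * (ang (s + r₁ + t₂) (s + r₂ + t₁) a.1.1 * kern (s + r₁ + t₁) a.1.2
        * kern (s + r₂ + t₂) a.2) := by
  obtain ⟨⟨v, z⟩, b⟩ := a
  simp only [triple, polar₃, polar]
  have e1 : b + (z - 2 * lg v + v) - (z - lg v) = b - lg v + v := by ring
  have e2 : b + (z - 2 * lg v + v) - (z - lg v + v) = b - lg v := by ring
  rw [e1, e2]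
  have hz := exp_sub_lg z v
  have hb := exp_sub_lg b v
  simp only [kern, ang]
  rw [← hz, ← hb]
  have : ∀ a b c d e f g h : ℂ, a + b + c + d + e = f + g + h →
      2 * Complex.exp a * (2 * Complex.exp b) * (2 * Complex.exp c * (2 * Complex.exp d))
        * Complex.exp e = 2 * (2 * Complex.exp f * (2 * Complex.exp g) * (2 * Complex.exp h)) := by
    intro a b c d e f g h H
    have := congrArg Complex.exp H
    simp only [Complex.exp_add] at this
    linear_combination 16 * this
  apply this
  push_cast; ring

lemma integrable_triple {r₁ r₂ t₁ t₂ s : ℂ} (h11 : 0 < (s + r₁ + t₁).re)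
    (h12 : 0 < (s + r₁ + t₂).re) (h21 : 0 < (s + r₂ + t₁).re) (h22 : 0 < (s + r₂ + t₂).re) :
    Integrable (triple r₁ r₂ t₁ t₂ s) ((volume.prod volume).prod volume) := by
  rw [← measurePreserving_polar₃.integrable_comp
    (continuous_triple r₁ r₂ t₁ t₂ s).aestronglyMeasurable]
  refine Integrable.congr ?_ (Filter.Eventually.of_forall fun a =>
    (triple_polar₃ r₁ r₂ t₁ t₂ s a).symm)
  exact (((integrable_ang h12 h21).mul_prod (integrable_kern h11)).mul_prod
    (integrable_kern h22)).const_mul 2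

lemma integral_triple {r₁ r₂ t₁ t₂ s : ℂ} (h11 : 0 < (s + r₁ + t₁).re)
    (h22 : 0 < (s + r₂ + t₂).re) :
    ∫ a, triple r₁ r₂ t₁ t₂ s a ∂((volume.prod volume).prod volume) =
      2 * ((∫ v, ang (s + r₁ + t₂) (s + r₂ + t₁) v) * G1 (s + r₁ + t₁) * G1 (s + r₂ + t₂)) := by
  rw [← measurePreserving_polar₃.map_eq, integral_map measurePreserving_polar₃.aemeasurable
    (continuous_triple r₁ r₂ t₁ t₂ s).aestronglyMeasurable]
  simp_rw [triple_polar₃]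
  rw [integral_const_mul, integral_prod_mul (fun a : ℝ × ℝ =>
    ang (s + r₁ + t₂) (s + r₂ + t₁) a.1 * kern (s + r₁ + t₁) a.2), integral_prod_mul,
    integral_kern h11, integral_kern h22]

lemma G1_ne_zero {p : ℂ} (hp : 0 < p.re) : G1 p ≠ 0 := by
  have hpi : (Real.pi : ℂ) ≠ 0 := by exact_mod_cast Real.pi_ne_zero
  refine mul_ne_zero (by simp [Complex.cpow_eq_zero_iff, hpi])
    (Complex.Gamma_ne_zero_of_re_pos (by simpa using hp))

/-- Barnes' lemma for the explicit convolutions `bessel`. -/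
lemma integral_bessel_mul_bessel {r₁ r₂ t₁ t₂ s : ℂ} (h11 : 0 < (s + r₁ + t₁).re)
    (h12 : 0 < (s + r₁ + t₂).re) (h21 : 0 < (s + r₂ + t₁).re) (h22 : 0 < (s + r₂ + t₂).re) :
    ∫ u : ℝ, bessel r₁ r₂ u * bessel t₁ t₂ u * Complex.exp (s * u) =
      2 * (G1 (s + r₁ + t₁) * G1 (s + r₁ + t₂) * G1 (s + r₂ + t₁) * G1 (s + r₂ + t₂))
            / G1 (2 * s + r₁ + r₂ + t₁ + t₂) := by
  have e : 2 * s + r₁ + r₂ + t₁ + t₂ = (s + r₁ + t₂) + (s + r₂ + t₁) := by ring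
  have hne : G1 ((s + r₁ + t₂) + (s + r₂ + t₁)) ≠ 0 :=
    G1_ne_zero (by rw [Complex.add_re (s + r₁ + t₂)]; exact add_pos h12 h21)
  have hT := integral_triple h11 h22
  rw [integral_prod_symm _ (integrable_triple h11 h12 h21 h22)] at hT
  have hu : ∀ u : ℝ, bessel r₁ r₂ u * bessel t₁ t₂ u * Complex.exp (s * u) =
      ∫ a, triple r₁ r₂ t₁ t₂ s (a, u) ∂(volume.prod volume) := by
    intro u
    simp only [triple, bessel]
    rw [integral_mul_const, ← integral_prod_mul]
  simp_rw [hu]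
  rw [hT, e, eq_div_iff hne]
  linear_combination 2 * G1 (s + r₁ + t₁) * G1 (s + r₂ + t₂) * integral_ang h12 h21

/-! ### Identification of the given functions -/

/-- A continuous `f` on `(0, ∞)` with the Mellin transform `G₁(s + r) G₁(s + t)` is, in logarithmic
coordinates and after the normalization by `a^{-1/2}`, almost everywhere the function `bessel r t`:
both have the same Fourier transform on a vertical line `Re s = c` where both are integrable. -/
lemma eq_bessel (r t : ℂ) (f : ℝ → ℂ) (hc : ContinuousOn f (Set.Ioi 0)) (σ : ℝ)
    (hi : ∀ s : ℂ, σ < s.re →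
      IntegrableOn (fun a : ℝ => ‖f a‖ * a ^ (s.re - 1 / 2) / a) (Set.Ioi 0))
    (hm : ∀ s : ℂ, σ < s.re →
      ∫ a in Set.Ioi (0 : ℝ), f a * (a : ℂ) ^ (s - 1 / 2) / (a : ℂ) = G1 (s + r) * G1 (s + t)) :
    ∀ᵐ u : ℝ, f (Real.exp u) = bessel r t u * Complex.exp (u / 2) := by
  obtain ⟨c, hcσ, hcr, hct⟩ : ∃ c : ℝ, σ < c ∧ 0 < c + r.re ∧ 0 < c + t.re := by
    refine ⟨|σ| + |r.re| + |t.re| + 1, ?_, ?_, ?_⟩ <;>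
    linarith [le_abs_self σ, neg_abs_le r.re, neg_abs_le t.re, abs_nonneg σ, abs_nonneg r.re,
      abs_nonneg t.re]
  have hint : ∀ s : ℂ, σ < s.re →
      Integrable (fun u : ℝ => f (Real.exp u) * Complex.exp ((s - 1 / 2) * u)) := by
    intro s hs
    have h0 : IntegrableOn (fun a : ℝ => f a * (a : ℂ) ^ (s - 1 / 2) / (a : ℂ)) (Set.Ioi 0) := by
      refine (hi s hs).mono' (ContinuousOn.aestronglyMeasurable ?_ measurableSet_Ioi) ?_
      · intro a ha
        have ha' : (a : ℂ) ∈ Complex.slitPlane := by simpa using ha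
        have h1 : ContinuousAt (fun a : ℝ => (a : ℂ) ^ (s - 1 / 2)) a :=
          ContinuousAt.comp (f := fun a : ℝ => (a : ℂ)) (g := fun z : ℂ => z ^ (s - 1 / 2))
            (continuousAt_cpow_const ha') (by fun_prop)
        exact ((hc a ha).mul h1.continuousWithinAt).div (by fun_prop)
          (by exact_mod_cast ne_of_gt ha)
      · filter_upwards [ae_restrict_mem measurableSet_Ioi] with a ha
        have ha : 0 < a := ha
        rw [norm_div, norm_mul, Complex.norm_cpow_eq_rpow_re_of_pos ha, Complex.norm_real,
          Real.norm_of_nonneg ha.le]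
        simp
    refine ((integrableOn_Ioi_iff_exp _).1 h0).congr (Filter.Eventually.of_forall fun u => ?_)
    have : ((Real.exp u : ℝ) : ℂ) ≠ 0 := by exact_mod_cast (Real.exp_pos u).ne'
    simp only [exp_cpow, Complex.real_smul]
    field_simp
  have hval : ∀ s : ℂ, σ < s.re →
      ∫ u : ℝ, f (Real.exp u) * Complex.exp ((s - 1 / 2) * u) = G1 (s + r) * G1 (s + t) := by
    intro s hs
    rw [← hm s hs, integral_Ioi_eq_integral_exp]
    congr 1; ext u
    have : ((Real.exp u : ℝ) : ℂ) ≠ 0 := by exact_mod_cast (Real.exp_pos u).ne'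
    simp only [exp_cpow, Complex.real_smul]
    field_simp
  have hD := ae_zero_of_fourier (f := fun u : ℝ =>
      f (Real.exp u) * Complex.exp (((c : ℂ) - 1 / 2) * u) - bessel r t u * Complex.exp (c * u))
    ((hint c (by simpa using hcσ)).sub (integrable_bessel (by simpa using hcr)
      (by simpa using hct))) (by
    intro τ
    have hs : σ < ((c : ℂ) + τ * Complex.I).re := by simpa using hcσ
    have h1 : 0 < ((c : ℂ) + τ * Complex.I + r).re := by simpa using hcr
    have h2 : 0 < ((c : ℂ) + τ * Complex.I + t).re := by simpa using hct
    have := integral_sub (hint _ hs) (integrable_bessel h1 h2)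
    rw [hval _ hs, integral_bessel h1 h2, sub_self] at this
    rw [← this]
    congr 1; ext u
    rw [show ((c : ℂ) + τ * Complex.I - 1 / 2) * u = τ * u * Complex.I + (c - 1 / 2) * u by ring,
      show ((c : ℂ) + τ * Complex.I) * u = τ * u * Complex.I + c * u by ring,
      Complex.exp_add, Complex.exp_add]
    ring)
  filter_upwards [hD] with u hu
  have e : Complex.exp (c * u) = Complex.exp (((c : ℂ) - 1 / 2) * u) * Complex.exp (u / 2) := by
    rw [← Complex.exp_add]; congr 1; ring
  rw [e] at hu
  apply mul_right_cancel₀ (Complex.exp_ne_zero (((c : ℂ) - 1 / 2) * u))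
  linear_combination hu

/-- Barnes' Lemma, Mellin form. -/
theorem statement5 (r₁ r₂ t₁ t₂ : ℂ) (f₁ f₂ : ℝ → ℂ)
    (hc₁ : ContinuousOn f₁ (Set.Ioi 0)) (hc₂ : ContinuousOn f₂ (Set.Ioi 0))
    (σ : ℝ)
    (hi₁ : ∀ s : ℂ, σ < s.re →
      IntegrableOn (fun a : ℝ => ‖f₁ a‖ * a ^ (s.re - 1 / 2) / a) (Set.Ioi 0))
    (hi₂ : ∀ s : ℂ, σ < s.re →
      IntegrableOn (fun a : ℝ => ‖f₂ a‖ * a ^ (s.re - 1 / 2) / a) (Set.Ioi 0))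
    (hi₁₂ : ∀ s : ℂ, σ < s.re →
      IntegrableOn (fun a : ℝ => ‖f₁ a * f₂ a‖ * a ^ (s.re - 1) / a) (Set.Ioi 0))
    (hm₁ : ∀ s : ℂ, σ < s.re →
      ∫ a in Set.Ioi (0 : ℝ), f₁ a * (a : ℂ) ^ (s - 1 / 2) / (a : ℂ)
        = G1 (s + r₁) * G1 (s + r₂))
    (hm₂ : ∀ s : ℂ, σ < s.re →
      ∫ a in Set.Ioi (0 : ℝ), f₂ a * (a : ℂ) ^ (s - 1 / 2) / (a : ℂ)
        = G1 (s + t₁) * G1 (s + t₂)) :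
    ∃ σ' : ℝ, ∀ s : ℂ, σ' < s.re →
      ∫ a in Set.Ioi (0 : ℝ), f₁ a * f₂ a * (a : ℂ) ^ (s - 1) / (a : ℂ)
        = 2 * (G1 (s + r₁ + t₁) * G1 (s + r₁ + t₂) * G1 (s + r₂ + t₁) * G1 (s + r₂ + t₂))
            / G1 (2 * s + r₁ + r₂ + t₁ + t₂) := by
  refine ⟨|r₁.re| + |r₂.re| + |t₁.re| + |t₂.re|, fun s hs => ?_⟩
  have hpos : ∀ r t : ℂ, |r.re| + |t.re| ≤ |r₁.re| + |r₂.re| + |t₁.re| + |t₂.re| →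
      0 < (s + r + t).re := by
    intro r t h
    rw [Complex.add_re, Complex.add_re]
    linarith [neg_abs_le r.re, neg_abs_le t.re]
  have n1 := abs_nonneg r₁.re
  have n2 := abs_nonneg r₂.re
  have n3 := abs_nonneg t₁.re
  have n4 := abs_nonneg t₂.re
  rw [← integral_bessel_mul_bessel (hpos r₁ t₁ (by linarith)) (hpos r₁ t₂ (by linarith))
    (hpos r₂ t₁ (by linarith)) (hpos r₂ t₂ (by linarith)), integral_Ioi_eq_integral_exp]
  apply integral_congr_ae
  filter_upwards [eq_bessel r₁ r₂ f₁ hc₁ σ hi₁ hm₁, eq_bessel t₁ t₂ f₂ hc₂ σ hi₂ hm₂]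
    with u h1 h2
  have hne : ((Real.exp u : ℝ) : ℂ) ≠ 0 := by exact_mod_cast (Real.exp_pos u).ne'
  have e : Complex.exp (s * u) =
      Complex.exp (u / 2) * Complex.exp (u / 2) * Complex.exp ((s - 1) * u) := by
    rw [← Complex.exp_add, ← Complex.exp_add]; congr 1; ring
  rw [exp_cpow, Complex.real_smul, h1, h2, e]
  field_simp
end

section
/- Let k > r ≥ 0 be integers and a > 0 a real number. Then ∫_0^π ((cos θ + 1)/2)^r · p_{k−r−1}(2πa(1 − cos θ)) · P^{k−1}_{rr}(cos θ) · sin θ dθ = 2 · (4πa)^{k−r−1} · (k+r−1)! / (2k−1)!. (This is the key archimedean integral, evaluated via orthogonality of the Legendre functions, computing the eigenvalue of the archimedean Hecke operator in the definite case of the Shimizu lift.) -/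
/-- The Legendre function P^l_{rr} given by the Rodrigues-type formula
P^l_{rr}(z) = ((−1)^{l−r} / (2^l (l−r)!)) · (1+z)^{−r} · d^{l−r}/dz^{l−r}[(1−z)^{l−r}(1+z)^{l+r}]. -/
noncomputable def legP (l r : ℕ) (z : ℝ) : ℝ :=
  ((-1 : ℝ) ^ (l - r) / (2 ^ l * ((l - r).factorial : ℝ))) *
    (deriv^[l - r] (fun w : ℝ => (1 - w) ^ (l - r) * (1 + w) ^ (l + r)) z) / (1 + z) ^ r

open Polynomial

theorem iterate_deriv_eval (p : ℝ[X]) (n : ℕ) :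
    deriv^[n] (fun w : ℝ => p.eval w) = fun w => (derivative^[n] p).eval w := by
  induction n with
  | zero => rfl
  | succ n ih =>
    rw [Function.iterate_succ_apply', ih, Function.iterate_succ_apply']
    funext w
    exact Polynomial.deriv _

theorem integral_mul_derivative (p q : ℝ[X]) (h₁ : q.eval 1 = 0) (h₂ : q.eval (-1) = 0) :
    ∫ z in (-1 : ℝ)..1, p.eval z * (derivative q).eval z =
      -∫ z in (-1 : ℝ)..1, (derivative p).eval z * q.eval z := by
  rw [intervalIntegral.integral_mul_deriv_eq_deriv_mul (u := fun z => p.eval z)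
    (v := fun z => q.eval z) (u' := fun z => (derivative p).eval z)
    (fun z _ => p.hasDerivAt z) (fun z _ => q.hasDerivAt z)
    ((Polynomial.continuous _).intervalIntegrable _ _)
    ((Polynomial.continuous _).intervalIntegrable _ _)]
  simp [h₁, h₂]

theorem integral_mul_iterate_derivative (n : ℕ) (p q : ℝ[X])
    (h₁ : ∀ i < n, (derivative^[i] q).eval 1 = 0)
    (h₂ : ∀ i < n, (derivative^[i] q).eval (-1) = 0) :
    ∫ z in (-1 : ℝ)..1, p.eval z * (derivative^[n] q).eval z =
      (-1) ^ n * ∫ z in (-1 : ℝ)..1, (derivative^[n] p).eval z * q.eval z := by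
  induction n generalizing p with
  | zero => simp
  | succ n ih =>
    rw [Function.iterate_succ_apply', integral_mul_derivative _ _ (h₁ n n.lt_succ_self)
      (h₂ n n.lt_succ_self), ih _ (fun i hi => h₁ i (by omega)) (fun i hi => h₂ i (by omega)),
      ← Function.iterate_succ_apply]
    ring

theorem eval_iterate_derivative_eq_zero {q : ℝ[X]} {c : ℝ} {n i : ℕ}
    (h : (X - C c) ^ n ∣ q) (hi : i < n) : (derivative^[i] q).eval c = 0 := by
  have h' := Polynomial.pow_sub_dvd_iterate_derivative_of_pow_dvd i h
  exact Polynomial.dvd_iff_isRoot.mp ((dvd_pow_self _ (by omega)).trans h')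

/-- The Beta integral over `[-1, 1]`. -/
theorem integral_one_sub_pow_mul_one_add_pow (n m : ℕ) :
    ∫ z in (-1 : ℝ)..1, (1 - z) ^ n * (1 + z) ^ m =
      2 ^ (n + m + 1) * (n.factorial * m.factorial : ℝ) / ((n + m + 1).factorial : ℝ) := by
  induction n generalizing m with
  | zero =>
    have h : ∀ z ∈ Set.uIcc (-1 : ℝ) 1,
        HasDerivAt (fun z : ℝ => (1 + z) ^ (m + 1) / (m + 1)) ((1 - z) ^ 0 * (1 + z) ^ m) z := by
      intro z _
      have hm : (m : ℝ) + 1 ≠ 0 := by positivity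
      refine ((((hasDerivAt_id' z).const_add 1).fun_pow (m + 1)).div_const
        ((m : ℝ) + 1)).congr_deriv ?_
      push_cast
      simp
      field_simp
    rw [intervalIntegral.integral_eq_sub_of_hasDerivAt h
      (Continuous.intervalIntegrable (by fun_prop) _ _)]
    have : (m.factorial : ℝ) ≠ 0 := by positivity
    have : (m : ℝ) + 1 ≠ 0 := by positivity
    rw [zero_add, Nat.factorial_succ]
    push_cast
    norm_num
    field_simp
  | succ n ih =>
    -- Integration by parts trades a factor `1 - z` for a factor `1 + z`.
    have h : ∫ z in (-1 : ℝ)..1, ((1 - X) ^ (n + 1) : ℝ[X]).eval z *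
        (((1 + X) ^ m : ℝ[X])).eval z =
        (n + 1) / (m + 1) * ∫ z in (-1 : ℝ)..1, (1 - z) ^ n * (1 + z) ^ (m + 1) := by
      have hm : (m : ℝ) + 1 ≠ 0 := by positivity
      have hu : ∀ z ∈ Set.uIcc (-1 : ℝ) 1, HasDerivAt (fun z : ℝ => (1 - z) ^ (n + 1))
          (-((n + 1) * (1 - z) ^ n)) z := by
        intro z _
        refine (((hasDerivAt_id' z).const_sub 1).fun_pow (n + 1)).congr_deriv ?_
        simp
      have hv : ∀ z ∈ Set.uIcc (-1 : ℝ) 1, HasDerivAt (fun z : ℝ => (1 + z) ^ (m + 1) / (m + 1))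
          ((1 + z) ^ m) z := by
        intro z _
        refine ((((hasDerivAt_id' z).const_add 1).fun_pow (m + 1)).div_const
          ((m : ℝ) + 1)).congr_deriv ?_
        simp
        field_simp
      have := intervalIntegral.integral_mul_deriv_eq_deriv_mul hu hv
        (Continuous.intervalIntegrable (by fun_prop) _ _)
        (Continuous.intervalIntegrable (by fun_prop) _ _)
      simp only [eval_pow, eval_sub, eval_add, eval_one, eval_X]
      rw [this, ← intervalIntegral.integral_const_mul]
      simp only [sub_self, add_neg_cancel, ne_eq, Nat.succ_ne_zero, not_false_eq_true, zero_pow,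
        zero_mul, zero_div, mul_zero, zero_sub]
      rw [← intervalIntegral.integral_neg]
      congr 1
      funext z
      ring
    simp only [eval_pow, eval_sub, eval_add, eval_one, eval_X] at h
    rw [h, ih, show n + 1 + m + 1 = n + (m + 1) + 1 by ring, Nat.factorial_succ n,
      Nat.factorial_succ m]
    have : (m : ℝ) + 1 ≠ 0 := by positivity
    push_cast
    field_simp

/-- The polynomial `z ↦ p_n(b (1 - z))`. -/
noncomputable def laguerrePoly (n : ℕ) (b : ℝ) : ℝ[X] :=
  ∑ j ∈ Finset.range (n + 1), C ((n.choose j : ℝ) * b ^ j / (j.factorial : ℝ)) * (X - C 1) ^ j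

theorem eval_laguerrePoly (n : ℕ) (b z : ℝ) :
    (laguerrePoly n b).eval z = laguerre n (b * (1 - z)) := by
  rw [laguerrePoly, laguerre, eval_finsetSum]
  refine Finset.sum_congr rfl fun j _ => ?_
  rw [show -(b * (1 - z)) = b * (z - 1) by ring, mul_pow]
  simp
  ring

theorem iterate_derivative_laguerrePoly (n : ℕ) (b : ℝ) :
    derivative^[n] (laguerrePoly n b) = C (b ^ n) := by
  rw [laguerrePoly, iterate_derivative_sum, Finset.sum_eq_single n]
  · rw [iterate_derivative_C_mul, iterate_derivative_X_sub_pow_self]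
    have : (n.factorial : ℝ) ≠ 0 := by positivity
    rw [← C_eq_natCast, ← C_mul]
    congr 1
    simp
    field_simp
  · intro j hj hjn
    have : j < n := by have := Finset.mem_range.mp hj; omega
    rw [iterate_derivative_C_mul, iterate_derivative_X_sub_pow,
      Nat.descFactorial_eq_zero_iff_lt.mpr this]
    simp
  · simp

/-- The polynomial `(1 - z) ^ n (1 + z) ^ m` of the Rodrigues formula. -/
noncomputable def rodriguesPoly (n m : ℕ) : ℝ[X] := (1 - X) ^ n * (1 + X) ^ m

theorem integral_laguerre_rodrigues (n m : ℕ) (hnm : n ≤ m) (b : ℝ) :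
    ∫ z in (-1 : ℝ)..1,
        (laguerrePoly n b).eval z * (derivative^[n] (rodriguesPoly n m)).eval z =
      (-1) ^ n * (b ^ n * (2 ^ (n + m + 1) * (n.factorial * m.factorial : ℝ) /
        ((n + m + 1).factorial : ℝ))) := by
  have d₁ : (X - C (1 : ℝ)) ^ n ∣ rodriguesPoly n m :=
    (pow_dvd_pow_of_dvd ⟨-1, by simp⟩ n).trans (dvd_mul_right _ _)
  have d₂ : (X - C (-1 : ℝ)) ^ n ∣ rodriguesPoly n m :=
    ((pow_dvd_pow_of_dvd ⟨1, by simp [add_comm]⟩ n).trans (pow_dvd_pow _ hnm)).trans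
      (dvd_mul_left _ _)
  rw [integral_mul_iterate_derivative n _ _ (fun i hi => eval_iterate_derivative_eq_zero d₁ hi)
    (fun i hi => eval_iterate_derivative_eq_zero d₂ hi), iterate_derivative_laguerrePoly,
    ← integral_one_sub_pow_mul_one_add_pow]
  simp [rodriguesPoly, intervalIntegral.integral_const_mul]

theorem integral_comp_cos_mul_sin {g : ℝ → ℝ} (hg : Continuous g) :
    ∫ θ in (0 : ℝ)..Real.pi, g (Real.cos θ) * Real.sin θ = ∫ z in (-1 : ℝ)..1, g z := by
  have h := intervalIntegral.integral_comp_mul_deriv (a := 0) (b := Real.pi) (g := g)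
    (fun x _ => Real.hasDerivAt_cos x) (by fun_prop) hg
  rw [Real.cos_zero, Real.cos_pi, intervalIntegral.integral_symm (-1) 1] at h
  simpa using h

theorem statement8 (k r : ℕ) (hr : r < k) (a : ℝ) (ha : 0 < a) :
    ∫ θ in (0 : ℝ)..Real.pi,
        ((Real.cos θ + 1) / 2) ^ r *
          laguerre (k - r - 1) (2 * Real.pi * a * (1 - Real.cos θ)) *
          legP (k - 1) r (Real.cos θ) * Real.sin θ
      = 2 * (4 * Real.pi * a) ^ (k - r - 1) *
          ((k + r - 1).factorial : ℝ) / ((2 * k - 1).factorial : ℝ) := by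
  obtain ⟨n, rfl⟩ : ∃ n, k = n + r + 1 := ⟨k - r - 1, by omega⟩
  rw [show n + r + 1 - r - 1 = n by omega, show n + r + 1 - 1 = n + r by omega,
    show n + r + 1 + r - 1 = n + 2 * r by omega,
    show 2 * (n + r + 1) - 1 = n + (n + 2 * r) + 1 by omega]
  set c : ℝ := (-1) ^ n / (2 ^ (n + 2 * r) * n.factorial) with hc
  set b : ℝ := 2 * Real.pi * a with hb
  have hleg : ∀ z : ℝ, legP (n + r) r z = (-1) ^ n / (2 ^ (n + r) * n.factorial) *
      (derivative^[n] (rodriguesPoly n (n + 2 * r))).eval z / (1 + z) ^ r := by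
    intro z
    have : (fun w : ℝ => (1 - w) ^ n * (1 + w) ^ (n + r + r)) =
        fun w => (rodriguesPoly n (n + 2 * r)).eval w := by
      funext w
      simp [rodriguesPoly, two_mul, add_assoc]
    rw [legP, Nat.add_sub_cancel, this, iterate_deriv_eval]
  have key : ∫ θ in (0 : ℝ)..Real.pi, ((Real.cos θ + 1) / 2) ^ r *
      laguerre n (b * (1 - Real.cos θ)) * legP (n + r) r (Real.cos θ) * Real.sin θ =
      ∫ z in (-1 : ℝ)..1, c * ((laguerrePoly n b).eval z *
        (derivative^[n] (rodriguesPoly n (n + 2 * r))).eval z) := by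
    refine Eq.trans ?_ (integral_comp_cos_mul_sin (g := fun z => c * ((laguerrePoly n b).eval z *
        (derivative^[n] (rodriguesPoly n (n + 2 * r))).eval z)) (by fun_prop))
    refine intervalIntegral.integral_congr fun θ _ => ?_
    -- At `cos θ = -1`, where the cancellation of `(1 + z) ^ r` fails, the factor `sin θ` vanishes.
    by_cases h0 : 1 + Real.cos θ = 0
    · have hs : Real.sin θ = 0 := by
        have h1 : Real.cos θ = -1 := by linarith
        have := Real.sin_sq_add_cos_sq θ
        rw [h1] at this
        nlinarith
      simp [hs]
    · simp only [hleg, eval_laguerrePoly, hc]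
      rw [add_comm (Real.cos θ) 1, div_pow]
      field_simp
      ring
  rw [key, intervalIntegral.integral_const_mul,
    integral_laguerre_rodrigues n _ (by omega), hc, hb]
  have hsq : ((-1 : ℝ) ^ n) * (-1) ^ n = 1 := by rw [← mul_pow]; simp
  have hf : (n.factorial : ℝ) ≠ 0 := by positivity
  have h4 : (4 * Real.pi * a) ^ n = 2 ^ n * (2 * Real.pi * a) ^ n := by
    rw [← mul_pow]; ring
  rw [h4]
  calc _ = ((-1 : ℝ) ^ n * (-1) ^ n) * ((2 * Real.pi * a) ^ n * 2 ^ (n + (n + 2 * r) + 1) /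
        2 ^ (n + 2 * r) * (n + 2 * r).factorial / (n + (n + 2 * r) + 1).factorial) := by
        field_simp
    _ = _ := by
        rw [hsq, show n + (n + 2 * r) + 1 = (n + 1) + (n + 2 * r) by ring, pow_add, pow_succ]
        field_simp
end

section
/- (Archimedean Rankin–Selberg integral, reduced form of Proposition 3.5.) Let k ≥ 1 and r ≥ 0 be integers and let s ∈ ℂ with Re(s) > 1/2 − k − r. Then ∫_0^∞ (2a^k e^{−2πa}) · (2a^{r+1/2} e^{−2πa}) · a^{s−1} da/a = 2^{3/2−s−k−r} · G₂(s + k + r − 1/2). Equivalently, writing Ψ(s) for the left-hand side (the Mellin convolution of the standard archimedean Whittaker functions of weights 2k and 2r+1), one has 2^{s+k+r−3/2} · G₂(s + k − r − 1/2) · Ψ(s) = G₂(s + k + r − 1/2) · G₂(s + k − r − 1/2), the archimedean Rankin–Selberg L-factor L(s, π₁ × π₂) for k > r. -/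
/-!
Multiplying the two Whittaker functions, the integrand becomes `4 * a ^ (w - 1) * exp (-4πa)` with
`w = s + k + r - 1/2`, so the Mellin integral is Euler's integral for `4 * (4π) ^ (-w) * Γ(w)`,
and the hypothesis on `s` says exactly that `0 < re w`. Splitting `(4π) ^ (-w)` as
`2 ^ (-w) * (2π) ^ (-w)` turns this into `2 ^ (1 - w) * G2 w`. The second identity follows because
the powers `2 ^ (w - 1)` and `2 ^ (1 - w)` cancel.
-/

open MeasureTheory

/-- G₂(s) = 2 · (2π)^{−s} · Γ(s). -/
noncomputable def G2 (s : ℂ) : ℂ := 2 * (2 * (Real.pi : ℂ)) ^ (-s) * Complex.Gamma s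

/-- On `a > 0` the product of Whittaker functions against `a ^ (s - 1) / a` is Euler's integrand
with exponent `s + k + r - 1/2`. -/
lemma whittaker_integrand_eq (k r : ℕ) (s : ℂ) {a : ℝ} (ha : 0 < a) :
    (((2 * a ^ (k : ℝ) * Real.exp (-(2 * Real.pi * a))) *
        (2 * a ^ ((r : ℝ) + 1 / 2) * Real.exp (-(2 * Real.pi * a))) : ℝ) : ℂ) *
      (a : ℂ) ^ (s - 1) / (a : ℂ)
    = 4 * ((a : ℂ) ^ ((s + k + r - 1 / 2) - 1) *
        Complex.exp (-(((4 * Real.pi : ℝ) : ℂ) * a))) := by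
  have ha' : (a : ℂ) ≠ 0 := by exact_mod_cast ha.ne'
  have hpow : (a : ℂ) ^ ((s + k + r - 1 / 2) - 1)
      = (a : ℂ) ^ (k : ℂ) * (a : ℂ) ^ ((r : ℂ) + 1 / 2) * (a : ℂ) ^ (s - 1) / a := by
    rw [← Complex.cpow_add _ _ ha', ← Complex.cpow_add _ _ ha',
      eq_div_iff ha']
    nth_rw 2 [← Complex.cpow_one (a : ℂ)]
    rw [← Complex.cpow_add _ _ ha']
    congr 1
    ring
  have hexp : Complex.exp (-(((4 * Real.pi : ℝ) : ℂ) * a))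
      = Complex.exp (-(2 * Real.pi * a)) * Complex.exp (-(2 * Real.pi * a)) := by
    rw [← Complex.exp_add]
    congr 1
    push_cast
    ring
  rw [hpow, hexp]
  push_cast [Complex.ofReal_cpow ha.le]
  ring

lemma two_cpow_mul_G2 (w : ℂ) :
    (2 : ℂ) ^ (1 - w) * G2 w
      = 4 * ((1 / ((4 * Real.pi : ℝ) : ℂ)) ^ w * Complex.Gamma w) := by
  have h4 : (1 / ((4 * Real.pi : ℝ) : ℂ)) ^ w
      = (2 : ℂ) ^ (-w) * (2 * (Real.pi : ℂ)) ^ (-w) := by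
    have hpos : (0 : ℝ) ≤ 2 * Real.pi := by positivity
    have hsplit : ((4 * Real.pi : ℝ) : ℂ) = ((2 : ℝ) : ℂ) * ((2 * Real.pi : ℝ) : ℂ) := by
      push_cast
      ring
    -- Inverting the base is legitimate since `4π` does not lie on the branch cut.
    have harg : ((4 * Real.pi : ℝ) : ℂ).arg ≠ Real.pi := by
      rw [Complex.arg_ofReal_of_nonneg (by positivity)]
      exact Real.pi_ne_zero.symm
    rw [one_div, Complex.inv_cpow _ _ harg, ← Complex.cpow_neg, hsplit,
      Complex.mul_cpow_ofReal_nonneg zero_le_two hpos]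
    push_cast
    rfl
  rw [h4, G2, sub_eq_add_neg, Complex.cpow_add _ _ two_ne_zero, Complex.cpow_one]
  ring

/-- Archimedean Rankin–Selberg integral: the Mellin convolution of the standard archimedean
Whittaker functions of weights 2k and 2r+1 equals 2^{3/2−s−k−r}·G₂(s+k+r−1/2); equivalently
2^{s+k+r−3/2}·G₂(s+k−r−1/2)·Ψ(s) = G₂(s+k+r−1/2)·G₂(s+k−r−1/2). -/
theorem statement16 (k r : ℕ) (hk : 1 ≤ k) (s : ℂ)
    (hs : 1 / 2 - (k : ℝ) - (r : ℝ) < s.re) :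
    (∫ a in Set.Ioi (0 : ℝ),
        (((2 * a ^ (k : ℝ) * Real.exp (-(2 * Real.pi * a))) *
            (2 * a ^ ((r : ℝ) + 1 / 2) * Real.exp (-(2 * Real.pi * a))) : ℝ) : ℂ) *
          (a : ℂ) ^ (s - 1) / (a : ℂ))
        = (2 : ℂ) ^ ((3 : ℂ) / 2 - s - (k : ℂ) - (r : ℂ)) * G2 (s + k + r - 1 / 2) ∧
    (2 : ℂ) ^ (s + (k : ℂ) + (r : ℂ) - 3 / 2) * G2 (s + k - r - 1 / 2) *
        (∫ a in Set.Ioi (0 : ℝ),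
          (((2 * a ^ (k : ℝ) * Real.exp (-(2 * Real.pi * a))) *
              (2 * a ^ ((r : ℝ) + 1 / 2) * Real.exp (-(2 * Real.pi * a))) : ℝ) : ℂ) *
            (a : ℂ) ^ (s - 1) / (a : ℂ))
      = G2 (s + k + r - 1 / 2) * G2 (s + k - r - 1 / 2) := by
  have hw : 0 < (s + k + r - 1 / 2 : ℂ).re := by
    have hre : (s + k + r - 1 / 2 : ℂ).re = s.re + k + r - 1 / 2 := by simp
    rw [hre]
    linarith
  have key : (∫ a in Set.Ioi (0 : ℝ),
        (((2 * a ^ (k : ℝ) * Real.exp (-(2 * Real.pi * a))) *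
            (2 * a ^ ((r : ℝ) + 1 / 2) * Real.exp (-(2 * Real.pi * a))) : ℝ) : ℂ) *
          (a : ℂ) ^ (s - 1) / (a : ℂ))
        = (2 : ℂ) ^ ((3 : ℂ) / 2 - s - (k : ℂ) - (r : ℂ)) * G2 (s + k + r - 1 / 2) := by
    have hpi : 0 < 4 * Real.pi := by positivity
    rw [setIntegral_congr_fun measurableSet_Ioi
        (fun a ha => whittaker_integrand_eq k r s (Set.mem_Ioi.mp ha)),
      integral_const_mul, Complex.integral_cpow_mul_exp_neg_mul_Ioi hw hpi,
      ← two_cpow_mul_G2]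
    congr 2
    ring
  refine ⟨key, ?_⟩
  have hcancel : (2 : ℂ) ^ (s + (k : ℂ) + (r : ℂ) - 3 / 2) *
      (2 : ℂ) ^ ((3 : ℂ) / 2 - s - (k : ℂ) - (r : ℂ)) = 1 := by
    rw [← Complex.cpow_add _ _ two_ne_zero]
    ring_nf
    exact Complex.cpow_zero 2
  rw [key]
  linear_combination (G2 (s + k + r - 1 / 2) * G2 (s + k - r - 1 / 2)) * hcancel
end

section
/- Let F be a field, c₁, c₂ ∈ F, and B = ℍ[F, c₁, c₂] the quaternion algebra over F with basis 1, i, j, k satisfying i² = c₁, j² = c₂, ij = −ji = k. Let K = F + F·i ⊆ B and for x = a + b·i ∈ K write x̄ = a − b·i. Suppose 𝒪_K ⊆ K is a subring (containing 1) with conjugate-stability x ∈ 𝒪_K ⇒ x̄ ∈ 𝒪_K, and L ⊆ K is an additive subgroup satisfying x·y ∈ L for all x ∈ 𝒪_K, y ∈ L, and c₂ · y · ȳ' ∈ 𝒪_K for all y, y' ∈ L. Then R = { x + y·j : x ∈ 𝒪_K, y ∈ L } is a subring of B. (This is the order property underlying the construction R = 𝒪_K + Lj of the Eichler order in the paper;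 it uses the relations j·x = x̄·j for x ∈ K and (y·j)(y'·j) = c₂·y·ȳ'.) -/
open Quaternion

/-!
In `ℍ[F, c₁, c₂]` the elements of `K = F + F·i` commute with each other, and `j * x = star x * j`
for `x ∈ K`. Hence
`(x + y * j) * (u + v * j) = (x * u + c₂ * y * star v) + (x * v + star u * y) * j`
for `x, y, u, v ∈ K` (`add_mul_j_mul_add_mul_j`), and the hypotheses on `𝒪_K` and `L` put the two
coefficients on the right in `𝒪_K` and `L` respectively.
-/

/-- Multiplication in `K + K·j`. The factor `star u` stands to the left of `y`, which is allowed
since `K` is commutative, so that stability of `L` under left multiplication by `𝒪_K` applies. -/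
theorem add_mul_j_mul_add_mul_j {F : Type*} [Field F] {c₁ c₂ : F} {x y u v : ℍ[F, c₁, c₂]}
    (hx : ∃ a b : F, x = (⟨a, b, 0, 0⟩ : ℍ[F, c₁, c₂]))
    (hy : ∃ a b : F, y = (⟨a, b, 0, 0⟩ : ℍ[F, c₁, c₂]))
    (hu : ∃ a b : F, u = (⟨a, b, 0, 0⟩ : ℍ[F, c₁, c₂]))
    (hv : ∃ a b : F, v = (⟨a, b, 0, 0⟩ : ℍ[F, c₁, c₂])) :
    (x + y * (⟨0, 0, 1, 0⟩ : ℍ[F, c₁, c₂])) * (u + v * (⟨0, 0, 1, 0⟩ : ℍ[F, c₁, c₂])) =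
      (x * u + (c₂ : ℍ[F, c₁, c₂]) * y * star v) +
        (x * v + star u * y) * (⟨0, 0, 1, 0⟩ : ℍ[F, c₁, c₂]) := by
  obtain ⟨a, b, rfl⟩ := hx
  obtain ⟨c, d, rfl⟩ := hy
  obtain ⟨e, f, rfl⟩ := hu
  obtain ⟨g, h, rfl⟩ := hv
  ext <;> simp <;> ring

/-- The order property underlying the construction R = 𝒪_K + L·j of the Eichler order:
inside the quaternion algebra B = ℍ[F, c₁, c₂], if 𝒪_K is a conjugation-stable subring of
K = F + F·i and L ⊆ K is an additive subgroup with 𝒪_K·L ⊆ L and c₂·L·L̄ ⊆ 𝒪_K, then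
R = { x + y·j : x ∈ 𝒪_K, y ∈ L } is a subring of B. -/
theorem statement17 (F : Type*) [Field F] (c₁ c₂ : F)
    (OK : Set (ℍ[F, c₁, c₂]))
    (hOKsub : ∀ x ∈ OK, ∃ a b : F, x = (⟨a, b, 0, 0⟩ : ℍ[F, c₁, c₂]))
    (hOK1 : (1 : ℍ[F, c₁, c₂]) ∈ OK)
    (hOKadd : ∀ x ∈ OK, ∀ y ∈ OK, x + y ∈ OK)
    (hOKneg : ∀ x ∈ OK, -x ∈ OK)
    (hOKmul : ∀ x ∈ OK, ∀ y ∈ OK, x * y ∈ OK)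
    (hOKstar : ∀ x ∈ OK, star x ∈ OK)
    (L : Set (ℍ[F, c₁, c₂]))
    (hLsub : ∀ y ∈ L, ∃ a b : F, y = (⟨a, b, 0, 0⟩ : ℍ[F, c₁, c₂]))
    (hL0 : (0 : ℍ[F, c₁, c₂]) ∈ L)
    (hLadd : ∀ x ∈ L, ∀ y ∈ L, x + y ∈ L)
    (hLneg : ∀ x ∈ L, -x ∈ L)
    (hLmul : ∀ x ∈ OK, ∀ y ∈ L, x * y ∈ L)
    (hLnorm : ∀ y ∈ L, ∀ y' ∈ L, (c₂ : ℍ[F, c₁, c₂]) * y * star y' ∈ OK) :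
    ∃ S : Subring (ℍ[F, c₁, c₂]),
      (S : Set (ℍ[F, c₁, c₂]))
        = {z | ∃ x ∈ OK, ∃ y ∈ L, z = x + y * (⟨0, 0, 1, 0⟩ : ℍ[F, c₁, c₂])} := by
  have hOK0 : (0 : ℍ[F, c₁, c₂]) ∈ OK := by
    simpa using hOKadd 1 hOK1 (-1) (hOKneg 1 hOK1)
  refine ⟨{ carrier := {z | ∃ x ∈ OK, ∃ y ∈ L, z = x + y * (⟨0, 0, 1, 0⟩ : ℍ[F, c₁, c₂])}
            mul_mem' := ?_
            one_mem' := ⟨1, hOK1, 0, hL0, by simp⟩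
            add_mem' := ?_
            zero_mem' := ⟨0, hOK0, 0, hL0, by simp⟩
            neg_mem' := ?_ }, rfl⟩
  · rintro _ _ ⟨x, hx, y, hy, rfl⟩ ⟨u, hu, v, hv, rfl⟩
    exact ⟨_, hOKadd _ (hOKmul x hx u hu) _ (hLnorm y hy v hv),
      _, hLadd _ (hLmul x hx v hv) _ (hLmul _ (hOKstar u hu) y hy),
      add_mul_j_mul_add_mul_j (hOKsub x hx) (hLsub y hy) (hOKsub u hu) (hLsub v hv)⟩
  · rintro _ _ ⟨x, hx, y, hy, rfl⟩ ⟨u, hu, v, hv, rfl⟩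
    exact ⟨x + u, hOKadd x hx u hu, y + v, hLadd y hy v hv, by rw [add_mul]; abel⟩
  · rintro _ ⟨x, hx, y, hy, rfl⟩
    exact ⟨-x, hOKneg x hx, -y, hLneg y hy, by rw [neg_mul]; abel⟩
end
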